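/- arXiv:2012.11177 — 2 statements merged into one kernel-verified Lean document; each statement's English description precedes it below -/
import Mathlib

section
/- Let G be a graph on n vertices and let 1/2 ≤ α ≤ 1. Then for every k with 1 ≤ k ≤ n, S_k(A_α(G)) ≥ α·S_k(Q(G)) + (1−2α)·S_k(A(G)), where Q(G) = D(G) + A(G) is the signless Laplacian matrix of G. -/
open Matrix Finset Real

/-- The `A_α`-matrix of a graph: `A_α(G) = α·D(G) + (1−α)·A(G)`. -/
noncomputable def Aalpha {n : ℕ} (α : ℝ) (G : SimpleGraph (Fin n)) [DecidableRel G.Adj] :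
    Matrix (Fin n) (Fin n) ℝ :=
  α • Matrix.diagonal (fun i => (G.degree i : ℝ)) + (1 - α) • G.adjMatrix ℝ

/-- The sum of the `k` largest eigenvalues of a real symmetric matrix, expressed as
the supremum over all `k`-subsets of indices of the corresponding eigenvalue sums. -/
noncomputable def Sk {n : ℕ} (M : Matrix (Fin n) (Fin n) ℝ) (k : ℕ) : ℝ :=
  if h : M.IsHermitian then
    sSup {x : ℝ | ∃ s : Finset (Fin n), s.card = k ∧ x = ∑ i ∈ s, h.eigenvalues i}
  else 0

/-- The signless Laplacian matrix `Q(G) = D(G) + A(G)`. -/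
noncomputable def Qmat {n : ℕ} (G : SimpleGraph (Fin n)) [DecidableRel G.Adj] :
    Matrix (Fin n) (Fin n) ℝ :=
  Matrix.diagonal (fun i => (G.degree i : ℝ)) + G.adjMatrix ℝ


lemma sk_exchange {n : ℕ} (f w : Fin n → ℝ) (k : ℕ) (hk1 : 1 ≤ k) (hkn : k ≤ n)
    (hw0 : ∀ j, 0 ≤ w j) (hw1 : ∀ j, w j ≤ 1) (hws : ∑ j, w j = k) :
    ∃ t : Finset (Fin n), t.card = k ∧ ∑ j, f j * w j ≤ ∑ j ∈ t, f j := by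
  have hne : (Finset.powersetCard k (Finset.univ : Finset (Fin n))).Nonempty := by
    apply Finset.powersetCard_nonempty.2
    simpa using hkn
  obtain ⟨t, ht, hmax⟩ := Finset.exists_max_image _ (fun t => ∑ j ∈ t, f j) hne
  have htc : t.card = k := (Finset.mem_powersetCard.1 ht).2
  have htn : t.Nonempty := Finset.card_pos.1 (by omega)
  obtain ⟨m, hm, hmin⟩ := Finset.exists_min_image t f htn
  have hout : ∀ j, j ∉ t → f j ≤ f m := by
    intro j hj
    have hj' : j ∉ t.erase m := fun h => hj (Finset.mem_of_mem_erase h)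
    have h := hmax (insert j (t.erase m)) (by
      rw [Finset.mem_powersetCard]
      refine ⟨Finset.subset_univ _, ?_⟩
      rw [Finset.card_insert_of_notMem hj', Finset.card_erase_of_mem hm]
      omega)
    rw [Finset.sum_insert hj', ← Finset.add_sum_erase t f hm] at h
    linarith
  refine ⟨t, htc, ?_⟩
  have h1 : ∑ j, (f j - f m) * w j ≤ ∑ j, if j ∈ t then f j - f m else 0 := by
    apply Finset.sum_le_sum
    intro j _
    split_ifs with hj
    · nlinarith [hmin j hj, hw1 j]
    · nlinarith [hout j hj, hw0 j]
  rw [Finset.sum_ite_mem, Finset.univ_inter, Finset.sum_sub_distrib] at h1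
  simp only [sub_mul, Finset.sum_sub_distrib, ← Finset.mul_sum, hws, Finset.sum_const, htc,
    nsmul_eq_mul] at h1
  linarith

lemma sk_bdd {n : ℕ} (f : Fin n → ℝ) (k : ℕ) :
    {x : ℝ | ∃ s : Finset (Fin n), s.card = k ∧ x = ∑ i ∈ s, f i}.Finite := by
  apply (Set.finite_range (fun s : Finset (Fin n) => ∑ i ∈ s, f i)).subset
  rintro x ⟨s, _, rfl⟩
  exact ⟨s, rfl⟩

lemma sk_kyfan {n : ℕ} (M : Matrix (Fin n) (Fin n) ℝ) (hM : M.IsHermitian)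
    (b : OrthonormalBasis (Fin n) ℝ (EuclideanSpace ℝ (Fin n)))
    (s : Finset (Fin n)) (hs : 1 ≤ s.card) :
    ∑ i ∈ s, inner ℝ (b i) (Matrix.toEuclideanLin M (b i)) ≤ Sk M s.card := by
  set u := hM.eigenvectorBasis with hu
  have hsym := Matrix.isSymmetric_toEuclideanLin_iff.2 hM
  have hT : ∀ j, Matrix.toEuclideanLin M (u j) = hM.eigenvalues j • u j := by
    intro j
    ext i
    have := congrFun (hM.mulVec_eigenvectorBasis j) i
    simpa [Matrix.toEuclideanLin] using this
  have hq : ∀ i, inner ℝ (b i) (Matrix.toEuclideanLin M (b i))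
      = ∑ j, hM.eigenvalues j * (inner ℝ (b i) (u j)) ^ 2 := by
    intro i
    rw [← u.sum_inner_mul_inner]
    apply Finset.sum_congr rfl
    intro j _
    rw [← hsym, hT, real_inner_smul_left, real_inner_comm (b i) (u j)]
    ring
  have hsw : ∑ i ∈ s, inner ℝ (b i) (Matrix.toEuclideanLin M (b i))
      = ∑ j, hM.eigenvalues j * ∑ i ∈ s, (inner ℝ (b i) (u j)) ^ 2 := by
    simp_rw [hq, Finset.mul_sum]
    rw [Finset.sum_comm]
  obtain ⟨t, ht, hle⟩ := sk_exchange hM.eigenvalues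
    (fun j => ∑ i ∈ s, (inner ℝ (b i) (u j)) ^ 2) s.card hs
    (by simpa using Finset.card_le_univ s)
    (fun j => Finset.sum_nonneg fun i _ => sq_nonneg _)
    (fun j => by
      have := b.orthonormal.sum_inner_products_le (u j) (s := s)
      simpa using this)
    (by
      rw [Finset.sum_comm]
      have : ∀ i ∈ s, ∑ j, (inner ℝ (b i) (u j)) ^ 2 = 1 := by
        intro i _
        have := u.sum_inner_mul_inner (b i) (b i)
        simp only [real_inner_self_eq_norm_sq, b.norm_eq_one, one_pow] at this
        rw [← this]
        apply Finset.sum_congr rfl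
        intro j _
        rw [real_inner_comm (b i) (u j)]
        ring
      rw [Finset.sum_congr rfl this]
      simp)
  rw [hsw]
  refine hle.trans ?_
  rw [Sk, dif_pos hM]
  exact le_csSup (sk_bdd _ _).bddAbove ⟨t, ht, rfl⟩

lemma sk_attained {n : ℕ} (M : Matrix (Fin n) (Fin n) ℝ) (hM : M.IsHermitian)
    (k : ℕ) (hkn : k ≤ n) :
    ∃ s : Finset (Fin n), s.card = k ∧ Sk M k =
      ∑ i ∈ s, inner ℝ (hM.eigenvectorBasis i)
        (Matrix.toEuclideanLin M (hM.eigenvectorBasis i)) := by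
  have hne : {x : ℝ | ∃ s : Finset (Fin n), s.card = k ∧
      x = ∑ i ∈ s, hM.eigenvalues i}.Nonempty := by
    obtain ⟨s, _, hs⟩ := Finset.exists_subset_card_eq
      (s := (Finset.univ : Finset (Fin n))) (n := k) (by simpa using hkn)
    exact ⟨_, s, hs, rfl⟩
  obtain ⟨s, hs, h⟩ := hne.csSup_mem (sk_bdd _ _)
  refine ⟨s, hs, ?_⟩
  rw [Sk, dif_pos hM, h]
  apply Finset.sum_congr rfl
  intro j _
  have hT : Matrix.toEuclideanLin M (hM.eigenvectorBasis j)
      = hM.eigenvalues j • hM.eigenvectorBasis j := by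
    ext i
    have := congrFun (hM.mulVec_eigenvectorBasis j) i
    simpa [Matrix.toEuclideanLin] using this
  rw [hT, real_inner_smul_right, real_inner_self_eq_norm_sq]
  simp

theorem stmt14 {n : ℕ} (G : SimpleGraph (Fin n)) [DecidableRel G.Adj]
    (α : ℝ) (hα0 : 1 / 2 ≤ α) (hα1 : α ≤ 1)
    (k : ℕ) (hk1 : 1 ≤ k) (hkn : k ≤ n) :
    Sk (Aalpha α G) k ≥ α * Sk (Qmat G) k + (1 - 2 * α) * Sk (G.adjMatrix ℝ) k := by
  have hA : (G.adjMatrix ℝ).IsHermitian := by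
    rw [Matrix.IsHermitian, Matrix.conjTranspose_eq_transpose_of_trivial]
    exact G.isSymm_adjMatrix
  have hD : (Matrix.diagonal (fun i => (G.degree i : ℝ))).IsHermitian :=
    Matrix.isHermitian_diagonal _
  have hQ : (Qmat G).IsHermitian := hD.add hA
  have hAa : (Aalpha α G).IsHermitian := by
    rw [Matrix.IsHermitian, Aalpha, Matrix.conjTranspose_add, Matrix.conjTranspose_smul,
      Matrix.conjTranspose_smul, hD.eq, hA.eq]
    simp
  have hdec : α • Qmat G = Aalpha α G + (2 * α - 1) • G.adjMatrix ℝ := by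
    rw [Qmat, Aalpha]
    module
  obtain ⟨s, hs, hS⟩ := sk_attained (Qmat G) hQ k hkn
  subst hs
  have h1 := sk_kyfan _ hAa hQ.eigenvectorBasis s hk1
  have h2 := sk_kyfan _ hA hQ.eigenvectorBasis s hk1
  have h3 : α * Sk (Qmat G) s.card =
      ∑ i ∈ s, inner ℝ (hQ.eigenvectorBasis i)
        (Matrix.toEuclideanLin (Aalpha α G) (hQ.eigenvectorBasis i)) +
      (2 * α - 1) * ∑ i ∈ s, inner ℝ (hQ.eigenvectorBasis i)
        (Matrix.toEuclideanLin (G.adjMatrix ℝ) (hQ.eigenvectorBasis i)) := by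
    rw [hS, Finset.mul_sum, Finset.mul_sum, ← Finset.sum_add_distrib]
    apply Finset.sum_congr rfl
    intro i _
    rw [← real_inner_smul_right, ← real_inner_smul_right, ← inner_add_right,
      ← LinearMap.smul_apply, ← LinearMap.smul_apply, ← LinearMap.add_apply,
      ← map_smul, ← map_smul, ← map_add, hdec]
  have h4 := mul_le_mul_of_nonneg_left h2 (by linarith : (0:ℝ) ≤ 2 * α - 1)
  linarith
end

section
/- Let G be a connected graph on n ≥ 12 vertices and let 1/2 ≤ α < 1. Then S_2(A_α(G)) ≥ S_2(A_α(P_n)), where P_n is the path on n vertices, with equality if and only if G is isomorphic to P_n. -/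
open Matrix Finset Real

lemma Aalpha_herm {n : ℕ} (α : ℝ) (G : SimpleGraph (Fin n)) [DecidableRel G.Adj] :
    (Aalpha α G).IsHermitian := by
  unfold Matrix.IsHermitian Aalpha
  rw [Matrix.conjTranspose_eq_transpose_of_trivial]
  simp [Matrix.transpose_add, Matrix.transpose_smul, Matrix.diagonal_transpose,
    SimpleGraph.transpose_adjMatrix]

lemma Sk_set_finite {n : ℕ} {M : Matrix (Fin n) (Fin n) ℝ} (h : M.IsHermitian) (k : ℕ) :
    {x : ℝ | ∃ s : Finset (Fin n), s.card = k ∧ x = ∑ i ∈ s, h.eigenvalues i}.Finite := by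
  apply (Set.finite_range (fun s : Finset (Fin n) => ∑ i ∈ s, h.eigenvalues i)).subset
  rintro x ⟨s, -, rfl⟩
  exact ⟨s, rfl⟩

lemma dot_inner {n : ℕ} (x y : EuclideanSpace ℝ (Fin n)) :
    inner ℝ x y = (x.ofLp) ⬝ᵥ (y.ofLp) := by
  simp [PiLp.inner_apply, dotProduct, mul_comm]

lemma Sk_attained {n : ℕ} (hn : 2 ≤ n) {M : Matrix (Fin n) (Fin n) ℝ} (h : M.IsHermitian) :
    ∃ x y : Fin n → ℝ, x ⬝ᵥ x = 1 ∧ y ⬝ᵥ y = 1 ∧ x ⬝ᵥ y = 0 ∧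
      Sk M 2 = x ⬝ᵥ (M *ᵥ x) + y ⬝ᵥ (M *ᵥ y) := by
  have hne : {x : ℝ | ∃ s : Finset (Fin n), s.card = 2 ∧
      x = ∑ i ∈ s, h.eigenvalues i}.Nonempty := by
    obtain ⟨s, -, hs⟩ := Finset.exists_subset_card_eq (s := (univ : Finset (Fin n))) (n := 2)
      (by simpa using hn)
    exact ⟨_, s, hs, rfl⟩
  obtain ⟨s, hs, hx⟩ := hne.csSup_mem (Sk_set_finite h 2)
  obtain ⟨i, j, hij, rfl⟩ := Finset.card_eq_two.1 hs
  have ho := h.eigenvectorBasis.orthonormal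
  have key : ∀ a b, (h.eigenvectorBasis a).ofLp ⬝ᵥ (h.eigenvectorBasis b).ofLp
      = if a = b then 1 else 0 := by
    intro a b
    rw [← dot_inner]
    exact (orthonormal_iff_ite.1 ho) a b
  refine ⟨(h.eigenvectorBasis i).ofLp, (h.eigenvectorBasis j).ofLp, ?_, ?_, ?_, ?_⟩
  · simp [key]
  · simp [key]
  · simp [key, hij]
  · rw [Sk, dif_pos h, hx, h.mulVec_eigenvectorBasis, h.mulVec_eigenvectorBasis,
      dotProduct_smul, dotProduct_smul, key, key, Finset.sum_pair hij]
    simp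

lemma rayleigh_expand {n : ℕ} {M : Matrix (Fin n) (Fin n) ℝ} (h : M.IsHermitian)
    (x : Fin n → ℝ) : x ⬝ᵥ (M *ᵥ x) =
      ∑ i, h.eigenvalues i * (x ⬝ᵥ (h.eigenvectorBasis i).ofLp) ^ 2 := by
  have h1 := h.eigenvectorBasis.sum_inner_mul_inner (WithLp.toLp 2 x) (WithLp.toLp 2 (M *ᵥ x))
  rw [dot_inner] at h1
  simp only at h1
  rw [← h1]
  refine Finset.sum_congr rfl fun i _ => ?_
  rw [dot_inner, dot_inner]
  simp only
  have hT : Mᵀ = M := by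
    rw [← Matrix.conjTranspose_eq_transpose_of_trivial]; exact h
  have : (h.eigenvectorBasis i).ofLp ⬝ᵥ (M *ᵥ x) =
      h.eigenvalues i * (x ⬝ᵥ (h.eigenvectorBasis i).ofLp) := by
    rw [Matrix.dotProduct_mulVec, ← Matrix.mulVec_transpose, hT, h.mulVec_eigenvectorBasis,
      smul_dotProduct, dotProduct_comm]
    simp
  rw [this]; ring

lemma norm_expand {n : ℕ} {M : Matrix (Fin n) (Fin n) ℝ} (h : M.IsHermitian)
    (x : Fin n → ℝ) : x ⬝ᵥ x = ∑ i, (x ⬝ᵥ (h.eigenvectorBasis i).ofLp) ^ 2 := by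
  have h1 := h.eigenvectorBasis.sum_inner_mul_inner (WithLp.toLp 2 x) (WithLp.toLp 2 x)
  rw [dot_inner] at h1
  simp only at h1
  rw [← h1]
  refine Finset.sum_congr rfl fun i _ => ?_
  rw [dot_inner, dot_inner]
  simp only
  rw [dotProduct_comm _ x]; ring

lemma kyfan {n : ℕ} (hn : 2 ≤ n) {M : Matrix (Fin n) (Fin n) ℝ} (h : M.IsHermitian)
    (x y : Fin n → ℝ) (hx : x ⬝ᵥ x = 1) (hy : y ⬝ᵥ y = 1) (hxy : x ⬝ᵥ y = 0) :
    x ⬝ᵥ (M *ᵥ x) + y ⬝ᵥ (M *ᵥ y) ≤ Sk M 2 := by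
  set w : Fin n → ℝ := fun i => (x ⬝ᵥ (h.eigenvectorBasis i).ofLp) ^ 2 +
    (y ⬝ᵥ (h.eigenvectorBasis i).ofLp) ^ 2 with hw
  have hw0 : ∀ i, 0 ≤ w i := fun i => by positivity
  have hws : ∑ i, w i = 2 := by
    rw [hw, Finset.sum_add_distrib, ← norm_expand, ← norm_expand, hx, hy]; norm_num
  have hw1 : ∀ i, w i ≤ 1 := by
    intro i
    set v := (h.eigenvectorBasis i).ofLp with hv
    have hvv : v ⬝ᵥ v = 1 := by
      rw [hv, ← dot_inner]
      have := (orthonormal_iff_ite.1 h.eigenvectorBasis.orthonormal) i i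
      simpa using this
    have h0 : 0 ≤ (v - (x ⬝ᵥ v) • x - (y ⬝ᵥ v) • y) ⬝ᵥ (v - (x ⬝ᵥ v) • x - (y ⬝ᵥ v) • y) := by
      exact Finset.sum_nonneg fun i _ => mul_self_nonneg _
    simp only [sub_dotProduct, dotProduct_sub, smul_dotProduct, dotProduct_smul, smul_eq_mul,
      hvv, hx, hy, hxy, dotProduct_comm y x, dotProduct_comm v x, dotProduct_comm v y] at h0
    show (x ⬝ᵥ v) ^ 2 + (y ⬝ᵥ v) ^ 2 ≤ 1
    nlinarith
  have hsum : x ⬝ᵥ (M *ᵥ x) + y ⬝ᵥ (M *ᵥ y) = ∑ i, h.eigenvalues i * w i := by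
    rw [rayleigh_expand h, rayleigh_expand h, ← Finset.sum_add_distrib]
    exact Finset.sum_congr rfl fun i _ => by rw [hw]; ring
  have : Nonempty (Fin n) := ⟨⟨0, by omega⟩⟩
  obtain ⟨a, -, ha⟩ := Finset.exists_max_image (univ : Finset (Fin n)) h.eigenvalues
    Finset.univ_nonempty
  have hne : ((univ : Finset (Fin n)).erase a).Nonempty := by
    rw [← Finset.card_pos, Finset.card_erase_of_mem (Finset.mem_univ _)]; simp; omega
  obtain ⟨b, hb, hb'⟩ := Finset.exists_max_image _ h.eigenvalues hne
  have hab : a ≠ b := by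
    intro e; subst e; simp at hb
  have hle : h.eigenvalues a + h.eigenvalues b ≤ Sk M 2 := by
    rw [Sk, dif_pos h]
    apply le_csSup (Sk_set_finite h 2).bddAbove
    exact ⟨{a, b}, Finset.card_pair hab, (Finset.sum_pair hab).symm⟩
  refine le_trans ?_ hle
  rw [hsum]
  have h2 : ∑ i, h.eigenvalues i * w i =
      ∑ i, (h.eigenvalues i - h.eigenvalues b) * w i + h.eigenvalues b * 2 := by
    rw [← hws, Finset.mul_sum, ← Finset.sum_add_distrib]
    exact Finset.sum_congr rfl fun i _ => by ring
  have h3 : ∑ i, (h.eigenvalues i - h.eigenvalues b) * w i ≤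
      h.eigenvalues a - h.eigenvalues b := by
    rw [← Finset.add_sum_erase _ _ (Finset.mem_univ a)]
    have h4 : ∑ i ∈ univ.erase a, (h.eigenvalues i - h.eigenvalues b) * w i ≤ 0 :=
      Finset.sum_nonpos fun i hi => mul_nonpos_of_nonpos_of_nonneg
        (sub_nonpos.2 (hb' i hi)) (hw0 i)
    have h5 : 0 ≤ h.eigenvalues a - h.eigenvalues b := sub_nonneg.2 (ha b (Finset.mem_univ _))
    nlinarith [hw1 a]
  linarith

noncomputable def phi (α a b : ℝ) : ℝ :=
  (2 * α - 1) * ((a ^ 2 + b ^ 2) / 2) + (1 - α) * ((a + b) ^ 2 / 2)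

lemma phi_nonneg {α : ℝ} (h0 : 1 / 2 ≤ α) (h1 : α < 1) (a b : ℝ) : 0 ≤ phi α a b := by
  have : 0 ≤ 2 * α - 1 := by linarith
  have : 0 ≤ 1 - α := by linarith
  unfold phi
  positivity

open Classical in
noncomputable def qf {n : ℕ} (α : ℝ) (G : SimpleGraph (Fin n)) (x : Fin n → ℝ) : ℝ :=
  ∑ u, ∑ v, if G.Adj u v then phi α (x u) (x v) else 0

lemma q_eq {n : ℕ} (α : ℝ) (G : SimpleGraph (Fin n)) [DecidableRel G.Adj] (x : Fin n → ℝ) :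
    x ⬝ᵥ (Aalpha α G *ᵥ x) = qf α G x := by
  have e1 : x ⬝ᵥ (Aalpha α G *ᵥ x) =
      ∑ u, ∑ v, if G.Adj u v then (α * x u ^ 2 + (1 - α) * (x u * x v)) else 0 := by
    unfold Aalpha
    rw [Matrix.add_mulVec, Matrix.smul_mulVec, Matrix.smul_mulVec]
    simp only [dotProduct, Pi.add_apply, Pi.smul_apply, smul_eq_mul, Matrix.mulVec_diagonal,
      SimpleGraph.adjMatrix_mulVec_apply, SimpleGraph.degree_eq_sum_if_adj]
    refine Finset.sum_congr rfl fun u _ => ?_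
    have : ∑ v ∈ G.neighborFinset u, x v = ∑ v, if G.Adj u v then x v else 0 := by
      rw [← Finset.sum_filter]
      refine Finset.sum_congr ?_ fun _ _ => rfl
      ext v; simp
    rw [this, mul_add, Finset.sum_mul, Finset.mul_sum, Finset.mul_sum, Finset.mul_sum,
      Finset.mul_sum, ← Finset.sum_add_distrib]
    refine Finset.sum_congr rfl fun v _ => ?_
    split_ifs <;> ring
  have e2 : x ⬝ᵥ (Aalpha α G *ᵥ x) =
      ∑ u, ∑ v, if G.Adj u v then (α * x v ^ 2 + (1 - α) * (x u * x v)) else 0 := by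
    rw [e1, Finset.sum_comm]
    refine Finset.sum_congr rfl fun u _ => Finset.sum_congr rfl fun v _ => ?_
    simp only [G.adj_comm v u, mul_comm (x v) (x u)]
  have e3 : x ⬝ᵥ (Aalpha α G *ᵥ x) =
      (x ⬝ᵥ (Aalpha α G *ᵥ x) + x ⬝ᵥ (Aalpha α G *ᵥ x)) / 2 := by ring
  rw [e3]
  nth_rewrite 1 [e1]
  rw [e2, ← Finset.sum_add_distrib, Finset.sum_div, qf]
  refine Finset.sum_congr rfl fun u _ => ?_
  rw [← Finset.sum_add_distrib, Finset.sum_div]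
  refine Finset.sum_congr rfl fun v _ => ?_
  by_cases h : G.Adj u v
  · simp only [h, if_true, phi]; ring
  · simp [h]

lemma qf_smul {n : ℕ} (α : ℝ) (G : SimpleGraph (Fin n)) (c : ℝ) (x : Fin n → ℝ) :
    qf α G (c • x) = c ^ 2 * qf α G x := by
  unfold qf
  rw [Finset.mul_sum]
  refine Finset.sum_congr rfl fun u _ => ?_
  rw [Finset.mul_sum]
  refine Finset.sum_congr rfl fun v _ => ?_
  split_ifs
  · simp only [phi, Pi.smul_apply, smul_eq_mul]; ring
  · simp

lemma qf_rot {n : ℕ} (α : ℝ) (G : SimpleGraph (Fin n)) (c s : ℝ) (hcs : c ^ 2 + s ^ 2 = 1)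
    (x y : Fin n → ℝ) :
    qf α G (c • x + s • y) + qf α G (-s • x + c • y) = qf α G x + qf α G y := by
  unfold qf
  rw [← Finset.sum_add_distrib, ← Finset.sum_add_distrib]
  refine Finset.sum_congr rfl fun u _ => ?_
  rw [← Finset.sum_add_distrib, ← Finset.sum_add_distrib]
  refine Finset.sum_congr rfl fun v _ => ?_
  split_ifs
  · simp only [phi, Pi.smul_apply, smul_eq_mul, Pi.add_apply]
    have hc : c ^ 2 = 1 - s ^ 2 := by linarith
    ring_nf
    rw [hc]
    ring
  · simp

lemma kyfan_scaled {n : ℕ} (hn : 2 ≤ n) (α : ℝ) (G : SimpleGraph (Fin n)) [DecidableRel G.Adj]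
    (x y : Fin n → ℝ) (hx : 0 < x ⬝ᵥ x) (hy : 0 < y ⬝ᵥ y) (hxy : x ⬝ᵥ y = 0) :
    qf α G x / (x ⬝ᵥ x) + qf α G y / (y ⬝ᵥ y) ≤ Sk (Aalpha α G) 2 := by
  have hsx := Real.sq_sqrt hx.le
  have hsy := Real.sq_sqrt hy.le
  have hpx := Real.sqrt_pos.2 hx
  have hpy := Real.sqrt_pos.2 hy
  have := kyfan hn (Aalpha_herm α G) ((√(x ⬝ᵥ x))⁻¹ • x) ((√(y ⬝ᵥ y))⁻¹ • y)
    (by simp only [smul_dotProduct, dotProduct_smul, smul_eq_mul]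
        rw [← mul_assoc, ← mul_inv, ← sq, hsx]; exact inv_mul_cancel₀ hx.ne')
    (by simp only [smul_dotProduct, dotProduct_smul, smul_eq_mul]
        rw [← mul_assoc, ← mul_inv, ← sq, hsy]; exact inv_mul_cancel₀ hy.ne')
    (by simp only [smul_dotProduct, dotProduct_smul, smul_eq_mul, hxy]; ring)
  rw [q_eq, q_eq, qf_smul, qf_smul, inv_pow, inv_pow, hsx, hsy] at this
  rw [div_eq_inv_mul, div_eq_inv_mul]
  exact this

lemma qf_lower {n : ℕ} {ι : Type*} {α : ℝ} (h0 : 1 / 2 ≤ α) (h1 : α < 1)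
    (G : SimpleGraph (Fin n)) (s : Finset ι) (f : ι → Fin n) (hf : Set.InjOn f s)
    (r : ι → ι → Prop) [∀ i j, Decidable (r i j)]
    (hr : ∀ i ∈ s, ∀ j ∈ s, r i j → G.Adj (f i) (f j)) (X : Fin n → ℝ) :
    ∑ i ∈ s, ∑ j ∈ s, (if r i j then phi α (X (f i)) (X (f j)) else 0) ≤ qf α G X := by
  classical
  have hnn : ∀ u v, 0 ≤ (if G.Adj u v then phi α (X u) (X v) else 0) := by
    intro u v; split_ifs
    · exact phi_nonneg h0 h1 _ _
    · exact le_rfl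
  calc _ ≤ ∑ i ∈ s, ∑ j ∈ s, (if G.Adj (f i) (f j) then phi α (X (f i)) (X (f j)) else 0) := by
        refine Finset.sum_le_sum fun i hi => Finset.sum_le_sum fun j hj => ?_
        by_cases h : r i j
        · simp [h, hr i hi j hj h]
        · simp only [h, if_false]; exact hnn _ _
    _ = ∑ u ∈ s.image f, ∑ v ∈ s.image f, (if G.Adj u v then phi α (X u) (X v) else 0) := by
        rw [Finset.sum_image hf]
        refine Finset.sum_congr rfl fun i _ => ?_
        rw [Finset.sum_image hf]
    _ ≤ ∑ u ∈ s.image f, ∑ v, (if G.Adj u v then phi α (X u) (X v) else 0) :=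
        Finset.sum_le_sum fun u _ => Finset.sum_le_sum_of_subset_of_nonneg
          (Finset.subset_univ _) fun _ _ _ => hnn _ _
    _ ≤ ∑ u, ∑ v, (if G.Adj u v then phi α (X u) (X v) else 0) :=
        Finset.sum_le_sum_of_subset_of_nonneg
          (Finset.subset_univ _) fun _ _ _ => Finset.sum_nonneg fun _ _ => hnn _ _
    _ = qf α G X := by unfold qf; congr!

/-- monotonicity of `S_2` under bijective homomorphisms -/
lemma Sk_mono {n : ℕ} (hn : 2 ≤ n) {α : ℝ} (h0 : 1 / 2 ≤ α) (h1 : α < 1)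
    (H G : SimpleGraph (Fin n)) [DecidableRel H.Adj] [DecidableRel G.Adj]
    (f : Fin n ≃ Fin n) (hf : ∀ u v, H.Adj u v → G.Adj (f u) (f v)) :
    Sk (Aalpha α H) 2 ≤ Sk (Aalpha α G) 2 := by
  obtain ⟨x, y, hx, hy, hxy, h⟩ := Sk_attained hn (Aalpha_herm α H)
  have key : ∀ z : Fin n → ℝ, qf α H z ≤ qf α G (z ∘ f.symm) := by
    intro z
    classical
    have := qf_lower h0 h1 G univ f f.injective.injOn (fun i j => H.Adj i j)
      (fun i _ j _ h => hf i j h) (z ∘ f.symm)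
    simp only [Function.comp, Equiv.symm_apply_apply] at this
    refine le_trans (le_of_eq ?_) this
    unfold qf; congr!
  have dk : ∀ z w : Fin n → ℝ, (z ∘ f.symm) ⬝ᵥ (w ∘ f.symm) = z ⬝ᵥ w := by
    intro z w
    exact Equiv.sum_comp f.symm (fun i => z i * w i)
  have hk := kyfan hn (Aalpha_herm α G) (x ∘ f.symm) (y ∘ f.symm) (by rw [dk, hx])
    (by rw [dk, hy]) (by rw [dk, hxy])
  rw [h, q_eq, q_eq]
  rw [q_eq, q_eq] at hk
  linarith [key x, key y]

lemma path_degree_le {n : ℕ} [DecidableRel (SimpleGraph.pathGraph n).Adj] (v : Fin n) :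
    (SimpleGraph.pathGraph n).degree v ≤ 2 := by
  rw [← SimpleGraph.card_neighborFinset_eq_degree,
    ← Finset.card_map (f := Fin.valEmbedding)]
  refine le_trans (Finset.card_le_card (t := {v.val - 1, v.val + 1}) ?_) (Finset.card_le_two)
  intro k hk
  simp only [Finset.mem_map, SimpleGraph.mem_neighborFinset, SimpleGraph.pathGraph_adj,
    Fin.valEmbedding_apply] at hk
  obtain ⟨a, ha, rfl⟩ := hk
  simp only [Finset.mem_insert, Finset.mem_singleton]
  omega

lemma path_degree_zero {n : ℕ} [DecidableRel (SimpleGraph.pathGraph n).Adj] (v : Fin n)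
    (hv : v.val = 0) : (SimpleGraph.pathGraph n).degree v ≤ 1 := by
  rw [← SimpleGraph.card_neighborFinset_eq_degree,
    ← Finset.card_map (f := Fin.valEmbedding)]
  refine le_trans (Finset.card_le_card (t := {v.val + 1}) ?_) (by simp)
  intro k hk
  simp only [Finset.mem_map, SimpleGraph.mem_neighborFinset, SimpleGraph.pathGraph_adj,
    Fin.valEmbedding_apply] at hk
  obtain ⟨a, ha, rfl⟩ := hk
  simp only [Finset.mem_singleton]
  omega

lemma path_lt {n : ℕ} (hn : 2 ≤ n) {α : ℝ} (h1 : α < 1) (x : Fin n → ℝ)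
    (hx : 0 < x ⬝ᵥ x) : qf α (SimpleGraph.pathGraph n) x < 2 * (x ⬝ᵥ x) := by
  classical
  set P := SimpleGraph.pathGraph n with hP
  have e1 : ∑ u, ∑ v, (if P.Adj u v then x u ^ 2 else 0) = ∑ u, (P.degree u : ℝ) * x u ^ 2 := by
    refine Finset.sum_congr rfl fun u _ => ?_
    rw [SimpleGraph.degree_eq_sum_if_adj, Finset.sum_mul]
    refine Finset.sum_congr rfl fun v _ => ?_
    split_ifs <;> ring
  have e2 : ∑ u, ∑ v, (if P.Adj u v then x v ^ 2 else 0) = ∑ u, (P.degree u : ℝ) * x u ^ 2 := by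
    rw [← e1, Finset.sum_comm]
    refine Finset.sum_congr rfl fun u _ => Finset.sum_congr rfl fun v _ => ?_
    simp only [P.adj_comm v u]
  have e3 : qf α P x = ∑ u, (P.degree u : ℝ) * x u ^ 2
      - (1 - α) / 2 * ∑ u, ∑ v, (if P.Adj u v then (x u - x v) ^ 2 else 0) := by
    have : ∑ u, (P.degree u : ℝ) * x u ^ 2 =
      (∑ u, ∑ v, (if P.Adj u v then x u ^ 2 else 0) +
        ∑ u, ∑ v, (if P.Adj u v then x v ^ 2 else 0)) / 2 := by rw [e1, e2]; ring
    rw [this, ← Finset.sum_add_distrib, Finset.sum_div, Finset.mul_sum,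
      ← Finset.sum_sub_distrib, qf]
    refine Finset.sum_congr rfl fun u _ => ?_
    rw [← Finset.sum_add_distrib, Finset.sum_div, Finset.mul_sum, ← Finset.sum_sub_distrib]
    refine Finset.sum_congr rfl fun v _ => ?_
    by_cases h : P.Adj u v
    · simp only [h, if_true, phi]; ring
    · simp [h]
  by_contra hcon
  push Not at hcon
  have e4 : 2 * (x ⬝ᵥ x) = ∑ u, 2 * x u ^ 2 := by
    rw [dotProduct, Finset.mul_sum]; exact Finset.sum_congr rfl fun u _ => by ring
  have hA : ∀ u ∈ (univ : Finset (Fin n)), 0 ≤ (2 - (P.degree u : ℝ)) * x u ^ 2 := by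
    intro u _
    have : (P.degree u : ℝ) ≤ 2 := by exact_mod_cast path_degree_le u
    exact mul_nonneg (by linarith) (sq_nonneg _)
  have hB : ∀ u ∈ (univ : Finset (Fin n)), ∀ v ∈ (univ : Finset (Fin n)),
      0 ≤ (if P.Adj u v then (x u - x v) ^ 2 else 0) := by
    intro u _ v _; split_ifs <;> positivity
  have hB' : 0 ≤ ∑ u, ∑ v, (if P.Adj u v then (x u - x v) ^ 2 else 0) :=
    Finset.sum_nonneg fun u hu => Finset.sum_nonneg fun v hv => hB u hu v hv
  have hA' := Finset.sum_nonneg hA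
  have e5 : ∑ u, (2 - (P.degree u : ℝ)) * x u ^ 2 =
      2 * (x ⬝ᵥ x) - ∑ u, (P.degree u : ℝ) * x u ^ 2 := by
    rw [e4, ← Finset.sum_sub_distrib]; exact Finset.sum_congr rfl fun u _ => by ring
  have hα : 0 < (1 - α) / 2 := by linarith
  have hBz : ∑ u, ∑ v, (if P.Adj u v then (x u - x v) ^ 2 else 0) = 0 := by
    nlinarith [mul_nonneg hα.le hB']
  have hAz : ∑ u, (2 - (P.degree u : ℝ)) * x u ^ 2 = 0 := by
    nlinarith [mul_nonneg hα.le hB']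
  have hadj : ∀ u v, P.Adj u v → x u = x v := by
    intro u v h
    have h2 := (Finset.sum_eq_zero_iff_of_nonneg fun u hu =>
      Finset.sum_nonneg fun v hv => hB u hu v hv).1 hBz u (Finset.mem_univ _)
    have h3 := (Finset.sum_eq_zero_iff_of_nonneg (hB u (Finset.mem_univ _))).1 h2 v
      (Finset.mem_univ _)
    rw [if_pos h] at h3
    have := pow_eq_zero_iff (two_ne_zero) |>.1 h3
    linarith
  have hz : ∀ k (hk : k < n), x ⟨k, hk⟩ = 0 := by
    intro k
    induction k with
    | zero =>
      intro hk
      have h2 := (Finset.sum_eq_zero_iff_of_nonneg hA).1 hAz ⟨0, hk⟩ (Finset.mem_univ _)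
      have h3 : (P.degree ⟨0, hk⟩ : ℝ) ≤ 1 := by exact_mod_cast path_degree_zero ⟨0, hk⟩ rfl
      rcases mul_eq_zero.1 h2 with h | h
      · linarith
      · exact pow_eq_zero_iff (two_ne_zero) |>.1 h
    | succ k ih =>
      intro hk
      rw [← ih (by omega)]
      apply hadj
      rw [hP, SimpleGraph.pathGraph_adj]
      right; rfl
  have : x ⬝ᵥ x = 0 := by
    rw [dotProduct]
    exact Finset.sum_eq_zero fun u _ => by rw [hz u.1 u.2]; ring
  linarith

lemma path_Sk_lt {n : ℕ} (hn : 2 ≤ n) {α : ℝ} (h1 : α < 1)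
    [DecidableRel (SimpleGraph.pathGraph n).Adj] :
    Sk (Aalpha α (SimpleGraph.pathGraph n)) 2 < 4 := by
  obtain ⟨x, y, hx, hy, hxy, h⟩ := Sk_attained hn (Aalpha_herm α (SimpleGraph.pathGraph n))
  rw [h, q_eq, q_eq]
  have := path_lt hn h1 x (by rw [hx]; norm_num)
  have := path_lt hn h1 y (by rw [hy]; norm_num)
  rw [hx] at *
  rw [hy] at *
  linarith

lemma unicyclic_gt {n : ℕ} (hn : 2 ≤ n) {α : ℝ} (h0 : 1 / 2 ≤ α) (h1 : α < 1)
    (G : SimpleGraph (Fin n)) [DecidableRel G.Adj]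
    [DecidableRel (SimpleGraph.pathGraph n).Adj] (hle : SimpleGraph.pathGraph n < G) :
    Sk (Aalpha α (SimpleGraph.pathGraph n)) 2 < Sk (Aalpha α G) 2 := by
  have hcard : n ≤ #G.edgeFinset := by
    have h2 : #(SimpleGraph.pathGraph n).edgeFinset < #G.edgeFinset :=
      Finset.card_lt_card (SimpleGraph.edgeFinset_ssubset_edgeFinset.2 hle)
    obtain ⟨m, rfl⟩ : ∃ m, n = m + 1 := ⟨n - 1, by omega⟩
    have h3 := (SimpleGraph.pathGraph_connected m).card_vert_le_card_edgeSet_add_one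
    rw [Nat.card_eq_fintype_card, Nat.card_eq_fintype_card, Fintype.card_fin,
      ← SimpleGraph.edgeFinset_card] at h3
    omega
  have hdeg := G.sum_degrees_eq_twice_card_edges
  have hone : (2 * n : ℝ) ≤ qf α G 1 := by
    have : qf α G 1 = ((∑ v, G.degree v : ℕ) : ℝ) := by
      push_cast
      unfold qf
      refine Finset.sum_congr rfl fun u _ => ?_
      rw [SimpleGraph.degree_eq_sum_if_adj]
      refine Finset.sum_congr rfl fun v _ => ?_
      by_cases h : G.Adj u v
      · simp only [h, if_true, phi, Pi.one_apply]; ring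
      · simp [h]
    rw [this, hdeg]
    push_cast
    have : (n : ℝ) ≤ #G.edgeFinset := by exact_mod_cast hcard
    linarith
  obtain ⟨x, y, hx, hy, hxy, h⟩ := Sk_attained hn (Aalpha_herm α (SimpleGraph.pathGraph n))
  rw [q_eq, q_eq] at h
  obtain ⟨c, s, hcs, hort⟩ : ∃ c s : ℝ, c ^ 2 + s ^ 2 = 1 ∧
      -s * (x ⬝ᵥ (1 : Fin n → ℝ)) + c * (y ⬝ᵥ (1 : Fin n → ℝ)) = 0 := by
    set a := x ⬝ᵥ (1 : Fin n → ℝ)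
    set b := y ⬝ᵥ (1 : Fin n → ℝ)
    by_cases hz : a ^ 2 + b ^ 2 = 0
    · have ha : a = 0 := by nlinarith [sq_nonneg a, sq_nonneg b]
      have hb : b = 0 := by nlinarith [sq_nonneg a, sq_nonneg b]
      exact ⟨1, 0, by norm_num, by rw [ha, hb]; ring⟩
    · have hp : 0 < a ^ 2 + b ^ 2 := lt_of_le_of_ne (by positivity) (Ne.symm hz)
      refine ⟨a / √(a ^ 2 + b ^ 2), b / √(a ^ 2 + b ^ 2), ?_, by ring⟩
      rw [div_pow, div_pow, Real.sq_sqrt hp.le, ← add_div, div_self hz]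
  have hyx : y ⬝ᵥ x = 0 := by rw [dotProduct_comm, hxy]
  have hX : (c • x + s • y) ⬝ᵥ (c • x + s • y) = 1 := by
    simp only [add_dotProduct, dotProduct_add, smul_dotProduct, dotProduct_smul, smul_eq_mul,
      hx, hy, hxy, hyx]
    linarith
  have hY : (-s • x + c • y) ⬝ᵥ (-s • x + c • y) = 1 := by
    simp only [add_dotProduct, dotProduct_add, smul_dotProduct, dotProduct_smul, smul_eq_mul,
      hx, hy, hxy, hyx]
    linarith
  have hrot := qf_rot α (SimpleGraph.pathGraph n) c s hcs x y
  have hlt := path_lt hn h1 _ (by rw [hX]; norm_num)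
  rw [hX] at hlt
  have hn0 : (0 : ℝ) < n := by exact_mod_cast (by omega : 0 < n)
  have h11 : (1 : Fin n → ℝ) ⬝ᵥ 1 = n := by simp [dotProduct]
  have hk := kyfan_scaled hn α G 1 (-s • x + c • y) (by rw [h11]; exact hn0)
    (by rw [hY]; norm_num) (by
      rw [dotProduct_comm]
      simp only [add_dotProduct, smul_dotProduct, smul_eq_mul]
      exact hort)
  rw [h11, hY, div_one] at hk
  have h2 : 2 ≤ qf α G 1 / n := by rw [le_div_iff₀ hn0]; exact hone
  have hmono : qf α (SimpleGraph.pathGraph n) (-s • x + c • y) ≤ qf α G (-s • x + c • y) := by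
    classical
    have := qf_lower h0 h1 G univ id Function.injective_id.injOn
      (fun i j => (SimpleGraph.pathGraph n).Adj i j)
      (fun i _ j _ h => hle.le h) (-s • x + c • y)
    refine le_trans (le_of_eq ?_) this
    unfold qf; simp only [id]; congr!
  linarith

/-- `G` contains the tree on `{0, …, p.length}` in which `i + 1` is joined to `p[i]`. -/
def TCont {n : ℕ} (G : SimpleGraph (Fin n)) (p : List ℕ) : Prop :=
  ∃ f : ℕ → Fin n, (∀ i < p.length + 1, ∀ j < p.length + 1, f i = f j → i = j) ∧
    ∀ i < p.length, G.Adj (f (i + 1)) (f (p.getD i 0))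

lemma exit_edge {n : ℕ} (G : SimpleGraph (Fin n)) (hG : G.Connected) (m : ℕ) (hm0 : 0 < m)
    (hm : m < n) (f : ℕ → Fin n) :
    ∃ i < m, ∃ w, (∀ j < m, f j ≠ w) ∧ G.Adj (f i) w := by
  classical
  set s : Finset (Fin n) := (Finset.range m).image f with hs
  have hc : s.card < n := lt_of_le_of_lt Finset.card_image_le (by simpa using hm)
  obtain ⟨w, hw⟩ : ∃ w, w ∉ s := by
    by_contra hcon
    push Not at hcon
    have : s = univ := Finset.eq_univ_iff_forall.2 hcon
    rw [this] at hc
    simp at hc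
  have h0 : f 0 ∈ s := Finset.mem_image_of_mem f (Finset.mem_range.2 hm0)
  obtain ⟨p⟩ := hG.preconnected (f 0) w
  obtain ⟨d, -, hd1, hd2⟩ := p.exists_boundary_dart (s : Set (Fin n)) (by simpa using h0)
    (by simpa using hw)
  obtain ⟨i, hi, hi'⟩ := Finset.mem_image.1 (Finset.mem_coe.1 hd1)
  refine ⟨i, Finset.mem_range.1 hi, d.snd, ?_, by rw [hi']; exact d.adj⟩
  intro j hj hjw
  apply hd2
  rw [← hjw]
  exact Finset.mem_coe.2 (Finset.mem_image_of_mem f (Finset.mem_range.2 hj))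

lemma TCont.step {n : ℕ} {G : SimpleGraph (Fin n)} (hG : G.Connected) {p : List ℕ}
    (hp : TCont G p) (hlen : p.length + 1 < n) (hpar : ∀ i < p.length, p.getD i 0 ≤ i) :
    ∃ v < p.length + 1, TCont G (p ++ [v]) := by
  obtain ⟨f, hinj, hadj⟩ := hp
  obtain ⟨v, hv, w, hw, hvw⟩ := exit_edge G hG (p.length + 1) (by omega) hlen f
  refine ⟨v, hv, fun i => if i < p.length + 1 then f i else w, ?_, ?_⟩
  · intro i hi j hj hij
    simp only [List.length_append, List.length_singleton] at hi hj
    simp only at hij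
    split_ifs at hij with h1 h2 h2
    · exact hinj i h1 j h2 hij
    · exact absurd hij (hw i h1)
    · exact absurd hij.symm (hw j h2)
    · omega
  · intro i hi
    simp only [List.length_append, List.length_singleton] at hi
    beta_reduce
    rcases Nat.lt_or_ge i p.length with h | h
    · have h3 := hpar i h
      rw [List.getD_append _ _ _ _ h, if_pos (by omega), if_pos (by omega)]
      exact hadj i h
    · have : i = p.length := by omega
      subst this
      rw [List.getD_append_right _ _ _ _ le_rfl, if_neg (by omega)]
      simp only [Nat.sub_self, List.getD_cons_zero]
      rw [if_pos hv]
      exact hvw.symm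

/-- adjacency test in the tree `p` -/
def adjb (p : List ℕ) (i j : ℕ) : Bool :=
  (decide (0 < i) && decide (i ≤ p.length) && decide (p.getD (i - 1) 0 = j)) ||
  (decide (0 < j) && decide (j ≤ p.length) && decide (p.getD (j - 1) 0 = i))

lemma adjb_adj {n : ℕ} {G : SimpleGraph (Fin n)} {p : List ℕ} {f : ℕ → Fin n}
    (hadj : ∀ i < p.length, G.Adj (f (i + 1)) (f (p.getD i 0))) {i j : ℕ}
    (h : adjb p i j = true) : G.Adj (f i) (f j) := by
  simp only [adjb, Bool.or_eq_true, Bool.and_eq_true, decide_eq_true_eq] at h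
  rcases h with ⟨⟨h1, h2⟩, h3⟩ | ⟨⟨h1, h2⟩, h3⟩
  · have := hadj (i - 1) (by omega)
    rwa [h3, Nat.sub_add_cancel h1] at this
  · have := hadj (j - 1) (by omega)
    rw [h3, Nat.sub_add_cancel h1] at this
    exact this.symm

/-- `mp` embeds the tree `t` into the tree `e` -/
def embOk (t e mp : List ℕ) : Prop :=
  (∀ i < t.length + 1, mp.getD i 0 < e.length + 1) ∧
  (∀ i < t.length + 1, ∀ j < t.length + 1, mp.getD i 0 = mp.getD j 0 → i = j) ∧
  (∀ i < t.length, adjb e (mp.getD (i + 1) 0) (mp.getD (t.getD i 0) 0) = true)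

instance (t e mp : List ℕ) : Decidable (embOk t e mp) := by
  unfold embOk; infer_instance

lemma TCont.emb {n : ℕ} {G : SimpleGraph (Fin n)} {t e mp : List ℕ} (h : embOk t e mp)
    (he : TCont G e) : TCont G t := by
  obtain ⟨f, hinj, hadj⟩ := he
  obtain ⟨h1, h2, h3⟩ := h
  exact ⟨fun i => f (mp.getD i 0),
    fun i hi j hj hij => h2 i hi j hj (hinj _ (h1 i hi) _ (h1 j hj) hij),
    fun i hi => adjb_adj hadj (h3 i hi)⟩

def formQ (p : List ℕ) (x : List ℤ) : ℤ :=
  ∑ i ∈ Finset.range (p.length + 1), ∑ j ∈ Finset.range (p.length + 1),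
    if adjb p i j = true then (x.getD i 0 + x.getD j 0) ^ 2 else 0

def formD (p : List ℕ) (x : List ℤ) : ℤ :=
  ∑ i ∈ Finset.range (p.length + 1), ∑ j ∈ Finset.range (p.length + 1),
    if adjb p i j = true then (x.getD i 0 ^ 2 + x.getD j 0 ^ 2) else 0

def dotZ (m : ℕ) (x y : List ℤ) : ℤ := ∑ i ∈ Finset.range m, x.getD i 0 * y.getD i 0

def certOk (p : List ℕ) (x y : List ℤ) : Prop :=
  dotZ (p.length + 1) x y = 0 ∧ 0 < dotZ (p.length + 1) x x ∧ 0 < dotZ (p.length + 1) y y ∧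
  16 * (dotZ (p.length + 1) x x * dotZ (p.length + 1) y y) ≤
    formQ p x * dotZ (p.length + 1) y y + formQ p y * dotZ (p.length + 1) x x ∧
  8 * (dotZ (p.length + 1) x x * dotZ (p.length + 1) y y) ≤
    formD p x * dotZ (p.length + 1) y y + formD p y * dotZ (p.length + 1) x x

instance (p : List ℕ) (x y : List ℤ) : Decidable (certOk p x y) := by
  unfold certOk; infer_instance

lemma cert_ge {n : ℕ} (hn : 2 ≤ n) {α : ℝ} (h0 : 1 / 2 ≤ α) (h1 : α < 1)
    (G : SimpleGraph (Fin n)) [DecidableRel G.Adj] {p : List ℕ} {x y : List ℤ}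
    (hc : certOk p x y) (hp : TCont G p) : 4 ≤ Sk (Aalpha α G) 2 := by
  obtain ⟨f, hinj, hadj⟩ := hp
  obtain ⟨hxy, hx, hy, hQ, hD⟩ := hc
  set m := p.length + 1 with hm
  have hinj' : Set.InjOn f (Finset.range m : Finset ℕ) := by
    intro i hi j hj hij
    exact hinj i (by simpa using hi) j (by simpa using hj) hij
  let lift : List ℤ → Fin n → ℝ := fun z v =>
    ∑ i ∈ Finset.range m, if f i = v then ((z.getD i 0 : ℤ) : ℝ) else 0
  have hlift : ∀ z, ∀ i ∈ Finset.range m, lift z (f i) = ((z.getD i 0 : ℤ) : ℝ) := by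
    intro z i hi
    show ∑ j ∈ Finset.range m, (if f j = f i then ((z.getD j 0 : ℤ) : ℝ) else 0) = _
    rw [Finset.sum_eq_single_of_mem i hi]
    · simp
    · intro j hj hji
      rw [if_neg]
      intro h
      exact hji (hinj' (Finset.mem_coe.2 hj) (Finset.mem_coe.2 hi) h)
  have hdot : ∀ z w, lift z ⬝ᵥ lift w = ((dotZ m z w : ℤ) : ℝ) := by
    intro z w
    have e1 : lift z ⬝ᵥ lift w = ∑ i ∈ Finset.range m, ((z.getD i 0 : ℤ) : ℝ) * lift w (f i) := by
      unfold dotProduct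
      show ∑ v, (∑ i ∈ Finset.range m, if f i = v then ((z.getD i 0 : ℤ) : ℝ) else 0) * lift w v
        = _
      simp only [Finset.sum_mul, ite_mul, zero_mul]
      rw [Finset.sum_comm]
      refine Finset.sum_congr rfl fun i _ => ?_
      rw [Finset.sum_ite_eq]
      simp
    rw [e1, dotZ]
    push_cast
    exact Finset.sum_congr rfl fun i hi => by rw [hlift w i hi]
  have hq : ∀ z, (2 * α - 1) * ((formD p z : ℤ) : ℝ) / 2 + (1 - α) * ((formQ p z : ℤ) : ℝ) / 2
      ≤ qf α G (lift z) := by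
    intro z
    have := qf_lower h0 h1 G (Finset.range m) f hinj' (fun i j => adjb p i j = true)
      (fun i _ j _ h => adjb_adj hadj h) (lift z)
    refine le_trans (le_of_eq ?_) this
    unfold formD formQ
    push_cast
    rw [← hm, Finset.mul_sum, Finset.mul_sum, Finset.sum_div, Finset.sum_div,
      ← Finset.sum_add_distrib]
    refine Finset.sum_congr rfl fun i hi => ?_
    rw [Finset.mul_sum, Finset.mul_sum, Finset.sum_div, Finset.sum_div,
      ← Finset.sum_add_distrib]
    refine Finset.sum_congr rfl fun j hj => ?_
    rw [hlift z i hi, hlift z j hj]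
    split_ifs
    · unfold phi; ring
    · simp
  have hx' : (0 : ℝ) < ((dotZ m x x : ℤ) : ℝ) := by exact_mod_cast hx
  have hy' : (0 : ℝ) < ((dotZ m y y : ℤ) : ℝ) := by exact_mod_cast hy
  have hk := kyfan_scaled hn α G (lift x) (lift y) (by rw [hdot]; exact hx')
    (by rw [hdot]; exact hy') (by rw [hdot, hxy]; simp)
  rw [hdot, hdot] at hk
  refine le_trans ?_ hk
  have hQ' : (16 : ℝ) * ((dotZ m x x : ℤ) * (dotZ m y y : ℤ)) ≤
    (formQ p x : ℤ) * (dotZ m y y : ℤ) + (formQ p y : ℤ) * (dotZ m x x : ℤ) := by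
    exact_mod_cast hQ
  have hD' : (8 : ℝ) * ((dotZ m x x : ℤ) * (dotZ m y y : ℤ)) ≤
    (formD p x : ℤ) * (dotZ m y y : ℤ) + (formD p y : ℤ) * (dotZ m x x : ℤ) := by
    exact_mod_cast hD
  have a1 := mul_le_mul_of_nonneg_right (hq x) hy'.le
  have a2 := mul_le_mul_of_nonneg_right (hq y) hx'.le
  have a3 := mul_le_mul_of_nonneg_left hQ' (by linarith : 0 ≤ 1 - α)
  have a4 := mul_le_mul_of_nonneg_left hD' (by linarith : 0 ≤ 2 * α - 1)
  rw [div_add_div _ _ hx'.ne' hy'.ne', le_div_iff₀ (mul_pos hx' hy')]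
  nlinarith

def goodT : List (List ℕ × List ℤ × List ℤ) := [
  ([0, 0, 0, 0, 0, 0], [6, 1, 1, 1, 1, 1, 1], [0, 0, 0, 0, -1, 0, 1]),
  ([0, 0, 0, 0, 0, 1], [3, 1, 1, 1, 1, 1, 0], [-1, 3, 0, 0, 0, 0, 2]),
  ([0, 0, 0, 0, 1, 1], [3, 2, 1, 1, 1, 0, 0], [-23, 54, -13, -13, -13, 16, 16]),
  ([0, 0, 0, 0, 1, 5], [3, 1, 1, 1, 1, 0, 0], [-10, 27, 1, 1, 1, 39, 13]),
  ([0, 0, 0, 1, 4, 4], [3, 2, 1, 1, 3, 1, 1], [-2, 0, -1, -1, 2, 1, 1]),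
  ([0, 0, 0, 1, 1, 2, 3], [10, 9, 4, 4, 2, 2, 1, 1], [4, -8, 5, 5, -3, -3, 2, 2]),
  ([0, 0, 0, 1, 1, 2, 4], [3, 3, 1, 1, 1, 1, 0, 0], [2, -2, 2, 1, -2, -1, 1, -1]),
  ([0, 0, 0, 1, 1, 2, 6], [4, 4, 2, 1, 1, 1, 1, 0], [1, -2, 2, 0, -1, -1, 2, 1]),
  ([0, 0, 0, 1, 4, 5, 5], [2, 1, 1, 1, 1, 2, 1, 1], [-2, -1, -1, -1, 1, 2, 1, 1]),
  ([0, 0, 0, 1, 4, 5, 6, 6], [2, 1, 1, 1, 1, 1, 2, 1, 1], [-2, -1, -1, -1, 0, 1, 2, 1, 1]),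
  ([0, 0, 0, 1, 2, 3, 4, 7, 8], [9, 5, 4, 4, 2, 1, 1, 1, 1, 0], [-2, 2, -2, -2, 6, -1, -1, 8, 6, 2]),
  ([0, 0, 0, 1, 2, 4, 6, 7, 8], [6, 3, 3, 2, 2, 1, 1, 1, 0, 0], [-2, 1, -1, -1, 3, 0, 4, 4, 3, 1]),
  ([0, 0, 0, 1, 4, 5, 6, 7, 7], [2, 1, 1, 1, 1, 1, 1, 2, 1, 1], [-2, -1, -1, -1, 0, 0, 1, 2, 1, 1]),
  ([0, 0, 0, 1, 4, 5, 6, 7, 8], [26, 16, 8, 8, 10, 6, 4, 2, 1, 0], [-6, 0, -2, -2, 5, 10, 12, 11, 8, 3]),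
  ([0, 0, 0, 1, 2, 3, 4, 5, 7, 8], [20, 10, 10, 9, 5, 5, 3, 2, 2, 1, 1], [0, 11, -11, 0, 17, -17, 0, 15, -15, 6, -6]),
  ([0, 0, 0, 1, 2, 4, 5, 6, 7, 8], [10, 5, 5, 3, 3, 3, 2, 1, 1, 0, 0], [-2, 3, -4, -1, 7, -4, 8, -3, 6, -1, 2])]

def badT : List (List ℕ) := [
  [0, 0, 0],
  [0, 0, 0, 0],
  [0, 0, 0, 1],
  [0, 0, 0, 0, 0],
  [0, 0, 0, 0, 1],
  [0, 0, 0, 1, 1],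
  [0, 0, 0, 1, 2],
  [0, 0, 0, 1, 4],
  [0, 0, 0, 0, 1, 2],
  [0, 0, 0, 1, 1, 2],
  [0, 0, 0, 1, 2, 3],
  [0, 0, 0, 1, 2, 4],
  [0, 0, 0, 1, 4, 5],
  [0, 0, 0, 0, 1, 2, 3],
  [0, 0, 0, 1, 2, 3, 4],
  [0, 0, 0, 1, 2, 4, 5],
  [0, 0, 0, 1, 2, 4, 6],
  [0, 0, 0, 1, 4, 5, 6],
  [0, 0, 0, 0, 1, 2, 3, 4],
  [0, 0, 0, 1, 2, 3, 4, 5],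
  [0, 0, 0, 1, 2, 3, 4, 7],
  [0, 0, 0, 1, 2, 4, 5, 6],
  [0, 0, 0, 1, 2, 4, 6, 7],
  [0, 0, 0, 1, 4, 5, 6, 7],
  [0, 0, 0, 1, 2, 3, 4, 5, 6],
  [0, 0, 0, 1, 2, 3, 4, 5, 7],
  [0, 0, 0, 1, 2, 4, 5, 6, 7],
  [0, 0, 0, 1, 2, 4, 5, 6, 8],
  [0, 0, 0, 1, 2, 3, 4, 5, 6, 7]]

def witT : List (List (ℕ × List ℕ)) := [
  [(17, [0, 1, 2, 3, 4]), (18, [0, 1, 2, 3, 4]), (18, [0, 2, 1, 3, 4]), (18, [0, 3, 1, 2, 4])],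
  [(19, [0, 1, 2, 3, 4, 5]), (20, [0, 1, 2, 3, 4, 5]), (20, [0, 2, 1, 3, 4, 5]), (20, [0, 3, 1, 2, 4, 5]), (20, [0, 4, 1, 2, 3, 5])],
  [(20, [0, 1, 2, 3, 5, 4]), (21, [0, 1, 2, 3, 4, 5]), (22, [0, 1, 2, 3, 4, 5]), (22, [0, 1, 3, 2, 4, 5]), (23, [0, 1, 2, 3, 4, 5])],
  [(0, [0, 1, 2, 3, 4, 5, 6]), (1, [0, 1, 2, 3, 4, 5, 6]), (1, [0, 2, 1, 3, 4, 5, 6]), (1, [0, 3, 1, 2, 4, 5, 6]), (1, [0, 4, 1, 2, 3, 5, 6]), (1, [0, 5, 1, 2, 3, 4, 6])],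
  [(1, [0, 1, 2, 3, 4, 6, 5]), (2, [0, 1, 2, 3, 4, 5, 6]), (24, [0, 1, 2, 3, 4, 5, 6]), (24, [0, 1, 3, 2, 4, 5, 6]), (24, [0, 1, 4, 2, 3, 5, 6]), (3, [0, 1, 2, 3, 4, 5, 6])],
  [(2, [0, 1, 2, 3, 6, 4, 5]), (2, [1, 0, 4, 5, 6, 2, 3]), (25, [0, 1, 2, 3, 4, 5, 6]), (25, [0, 1, 3, 2, 4, 5, 6]), (25, [1, 0, 4, 5, 2, 3, 6]), (25, [1, 0, 5, 4, 2, 3, 6])],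
  [(24, [0, 1, 2, 3, 6, 4, 5]), (25, [0, 1, 2, 3, 4, 6, 5]), (25, [0, 2, 1, 3, 5, 6, 4]), (26, [0, 1, 2, 3, 4, 5, 6]), (27, [0, 1, 2, 3, 4, 5, 6]), (27, [0, 2, 1, 3, 5, 4, 6])],
  [(3, [0, 1, 2, 3, 6, 4, 5]), (25, [1, 0, 4, 6, 2, 3, 5]), (27, [0, 1, 2, 3, 4, 6, 5]), (27, [0, 1, 3, 2, 4, 6, 5]), (4, [0, 1, 2, 3, 4, 5, 6]), (28, [0, 1, 2, 3, 4, 5, 6])],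
  [(1, [0, 1, 2, 3, 4, 7, 5]), (2, [0, 1, 2, 3, 4, 5, 7]), (2, [0, 2, 1, 3, 4, 6, 7]), (29, [0, 1, 2, 3, 4, 5, 6, 7]), (29, [0, 1, 2, 4, 3, 5, 6, 7]), (3, [0, 1, 2, 3, 4, 5, 7]), (3, [0, 2, 1, 3, 4, 6, 7])],
  [(2, [0, 1, 2, 3, 7, 4, 5]), (2, [1, 0, 4, 5, 7, 2, 3]), (4, [1, 0, 4, 5, 2, 6, 7]), (5, [0, 1, 2, 3, 4, 5, 6, 7]), (6, [0, 1, 2, 3, 4, 5, 6, 7]), (6, [0, 1, 2, 3, 5, 4, 6, 7]), (7, [0, 1, 2, 3, 4, 5, 6, 7])],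
  [(29, [0, 1, 2, 3, 7, 4, 5, 6]), (5, [0, 1, 2, 3, 4, 7, 5, 6]), (5, [0, 2, 1, 3, 5, 7, 4, 6]), (5, [0, 3, 1, 2, 6, 7, 4, 5]), (30, [0, 1, 2, 3, 4, 5, 6, 7]), (30, [0, 2, 1, 3, 5, 4, 6, 7]), (30, [0, 3, 1, 2, 6, 4, 5, 7])],
  [(3, [0, 1, 2, 3, 7, 4, 6]), (6, [0, 1, 2, 3, 4, 7, 5, 6]), (7, [0, 2, 1, 3, 5, 7, 4, 6]), (30, [0, 1, 2, 3, 4, 5, 7, 6]), (4, [0, 1, 2, 3, 4, 6, 7]), (31, [0, 1, 2, 3, 4, 5, 6, 7]), (32, [0, 1, 2, 3, 4, 5, 6, 7])],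
  [(3, [0, 1, 2, 3, 7, 4, 5]), (7, [1, 0, 4, 7, 2, 3, 5, 6]), (32, [0, 1, 2, 3, 4, 7, 5, 6]), (32, [0, 1, 3, 2, 4, 7, 5, 6]), (4, [0, 1, 2, 3, 4, 5, 7]), (8, [0, 1, 2, 3, 4, 5, 6, 7]), (33, [0, 1, 2, 3, 4, 5, 6, 7])],
  [(1, [0, 1, 2, 3, 4, 8, 5]), (2, [0, 1, 2, 3, 4, 5, 8]), (2, [0, 2, 1, 3, 4, 6, 8]), (2, [0, 3, 1, 2, 4, 7, 8]), (34, [0, 1, 2, 3, 4, 5, 6, 7, 8]), (3, [0, 1, 2, 3, 4, 5, 8]), (3, [0, 2, 1, 3, 4, 6, 8]), (3, [0, 3, 1, 2, 4, 7, 8])],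
  [(3, [0, 1, 2, 3, 8, 4, 7]), (5, [0, 1, 2, 3, 4, 8, 5, 6]), (5, [0, 2, 1, 3, 5, 8, 4, 6]), (5, [0, 3, 1, 2, 6, 8, 4, 5]), (4, [0, 1, 2, 3, 4, 7, 8]), (35, [0, 1, 2, 3, 4, 5, 6, 7, 8]), (35, [0, 1, 3, 2, 4, 6, 5, 7, 8]), (36, [0, 1, 2, 3, 4, 5, 6, 7, 8])],
  [(3, [0, 1, 2, 3, 8, 4, 6]), (6, [0, 1, 2, 3, 4, 8, 5, 6]), (6, [0, 2, 1, 3, 5, 8, 4, 7]), (35, [0, 1, 2, 3, 4, 5, 8, 6, 7]), (4, [0, 1, 2, 3, 4, 6, 8]), (4, [0, 2, 1, 3, 5, 7, 8]), (37, [0, 1, 2, 3, 4, 5, 6, 7, 8]), (37, [0, 2, 1, 3, 5, 4, 7, 6, 8])],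
  [(3, [0, 1, 2, 3, 8, 4, 6]), (6, [0, 1, 2, 3, 4, 8, 5, 6]), (7, [0, 2, 1, 3, 5, 8, 4, 6]), (36, [0, 1, 2, 3, 4, 5, 8, 6, 7]), (4, [0, 1, 2, 3, 4, 6, 8]), (37, [0, 1, 2, 3, 4, 5, 6, 8, 7]), (8, [0, 1, 2, 3, 4, 6, 7, 8]), (38, [0, 1, 2, 3, 4, 5, 6, 7, 8])],
  [(3, [0, 1, 2, 3, 8, 4, 5]), (7, [1, 0, 4, 8, 2, 3, 5, 6]), (38, [0, 1, 2, 3, 4, 8, 5, 6, 7]), (38, [0, 1, 3, 2, 4, 8, 5, 6, 7]), (4, [0, 1, 2, 3, 4, 5, 8]), (8, [0, 1, 2, 3, 4, 5, 6, 8]), (9, [0, 1, 2, 3, 4, 5, 6, 7, 8]), (39, [0, 1, 2, 3, 4, 5, 6, 7, 8])],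
  [(1, [0, 1, 2, 3, 4, 9, 5]), (2, [0, 1, 2, 3, 4, 5, 9]), (2, [0, 2, 1, 3, 4, 6, 9]), (2, [0, 3, 1, 2, 4, 7, 9]), (2, [0, 4, 1, 2, 3, 8, 9]), (3, [0, 1, 2, 3, 4, 5, 9]), (3, [0, 2, 1, 3, 4, 6, 9]), (3, [0, 3, 1, 2, 4, 7, 9]), (3, [0, 4, 1, 2, 3, 8, 9])],
  [(3, [0, 1, 2, 3, 9, 4, 7]), (5, [0, 1, 2, 3, 4, 9, 5, 6]), (5, [0, 2, 1, 3, 5, 9, 4, 6]), (5, [0, 3, 1, 2, 6, 9, 4, 5]), (4, [0, 1, 2, 3, 4, 7, 9]), (4, [0, 2, 1, 3, 5, 8, 9]), (40, [0, 1, 2, 3, 4, 5, 6, 7, 8, 9]), (41, [0, 1, 2, 3, 4, 5, 6, 7, 8, 9]), (41, [0, 2, 1, 3, 5, 4, 6, 8, 7, 9])],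
  [(3, [0, 1, 2, 3, 9, 4, 7]), (5, [0, 1, 2, 3, 4, 9, 5, 6]), (5, [0, 2, 1, 3, 5, 9, 4, 6]), (5, [0, 3, 1, 2, 6, 9, 4, 5]), (4, [0, 1, 2, 3, 4, 7, 9]), (41, [0, 1, 2, 3, 4, 5, 6, 7, 9, 8]), (41, [0, 1, 3, 2, 4, 6, 5, 7, 9, 8]), (8, [0, 1, 2, 3, 4, 7, 8, 9]), (10, [0, 1, 2, 3, 4, 5, 6, 7, 8, 9])],
  [(3, [0, 1, 2, 3, 9, 4, 6]), (6, [0, 1, 2, 3, 4, 9, 5, 6]), (6, [0, 2, 1, 3, 5, 9, 4, 7]), (41, [0, 1, 2, 3, 4, 5, 9, 6, 7, 8]), (4, [0, 1, 2, 3, 4, 6, 9]), (4, [0, 2, 1, 3, 5, 7, 9]), (8, [0, 1, 2, 3, 4, 6, 8, 9]), (42, [0, 1, 2, 3, 4, 5, 6, 7, 8, 9]), (43, [0, 1, 2, 3, 4, 5, 6, 7, 8, 9])],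
  [(3, [0, 1, 2, 3, 9, 4, 6]), (6, [0, 1, 2, 3, 4, 9, 5, 6]), (7, [0, 2, 1, 3, 5, 9, 4, 6]), (10, [0, 1, 2, 3, 4, 5, 9, 6, 7, 8]), (4, [0, 1, 2, 3, 4, 6, 9]), (43, [0, 1, 2, 3, 4, 5, 6, 9, 7, 8]), (8, [0, 1, 2, 3, 4, 6, 7, 9]), (9, [0, 1, 2, 3, 4, 6, 7, 8, 9]), (11, [0, 1, 2, 3, 4, 5, 6, 7, 8, 9])],
  [(3, [0, 1, 2, 3, 9, 4, 5]), (7, [1, 0, 4, 9, 2, 3, 5, 6]), (11, [0, 1, 2, 3, 4, 9, 5, 6, 7, 8]), (11, [0, 1, 3, 2, 4, 9, 5, 6, 7, 8]), (4, [0, 1, 2, 3, 4, 5, 9]), (8, [0, 1, 2, 3, 4, 5, 6, 9]), (9, [0, 1, 2, 3, 4, 5, 6, 7, 9]), (12, [0, 1, 2, 3, 4, 5, 6, 7, 8, 9]), (13, [0, 1, 2, 3, 4, 5, 6, 7, 8, 9])],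
  [(3, [0, 1, 2, 3, 10, 4, 7]), (5, [0, 1, 2, 3, 4, 10, 5, 6]), (5, [0, 2, 1, 3, 5, 10, 4, 6]), (5, [0, 3, 1, 2, 6, 10, 4, 5]), (4, [0, 1, 2, 3, 4, 7, 10]), (4, [0, 2, 1, 3, 5, 8, 10]), (4, [0, 3, 1, 2, 6, 9, 10]), (44, [0, 1, 2, 3, 4, 5, 6, 7, 8, 9, 10]), (44, [0, 2, 1, 3, 5, 4, 6, 8, 7, 9, 10]), (44, [0, 3, 1, 2, 6, 4, 5, 9, 7, 8, 10])],
  [(3, [0, 1, 2, 3, 10, 4, 7]), (5, [0, 1, 2, 3, 4, 10, 5, 6]), (5, [0, 2, 1, 3, 5, 10, 4, 6]), (5, [0, 3, 1, 2, 6, 10, 4, 5]), (4, [0, 1, 2, 3, 4, 7, 10]), (4, [0, 2, 1, 3, 5, 8, 10]), (44, [0, 1, 2, 3, 4, 5, 6, 7, 8, 10, 9]), (8, [0, 1, 2, 3, 4, 7, 9, 10]), (14, [0, 1, 2, 3, 4, 5, 6, 7, 8, 9, 10]), (10, [0, 1, 2, 3, 4, 5, 6, 7, 9, 10])],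
  [(3, [0, 1, 2, 3, 10, 4, 6]), (6, [0, 1, 2, 3, 4, 10, 5, 6]), (6, [0, 2, 1, 3, 5, 10, 4, 7]), (14, [0, 1, 2, 3, 4, 5, 10, 6, 7, 8, 9]), (4, [0, 1, 2, 3, 4, 6, 10]), (4, [0, 2, 1, 3, 5, 7, 10]), (8, [0, 1, 2, 3, 4, 6, 8, 10]), (8, [0, 2, 1, 3, 5, 7, 9, 10]), (15, [0, 1, 2, 3, 4, 5, 6, 7, 8, 9, 10]), (15, [0, 2, 1, 3, 5, 4, 7, 6, 9, 8, 10])],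
  [(3, [0, 1, 2, 3, 10, 4, 6]), (6, [0, 1, 2, 3, 4, 10, 5, 6]), (6, [0, 2, 1, 3, 5, 10, 4, 7]), (10, [0, 1, 2, 3, 4, 5, 10, 6, 8, 9]), (4, [0, 1, 2, 3, 4, 6, 10]), (4, [0, 2, 1, 3, 5, 7, 10]), (8, [0, 1, 2, 3, 4, 6, 8, 10]), (15, [0, 1, 2, 3, 4, 5, 6, 7, 8, 10, 9]), (9, [0, 1, 2, 3, 4, 6, 8, 9, 10]), (11, [0, 1, 2, 3, 4, 5, 6, 8, 9, 10])],
  [(3, [0, 1, 2, 3, 11, 4, 7]), (5, [0, 1, 2, 3, 4, 11, 5, 6]), (5, [0, 2, 1, 3, 5, 11, 4, 6]), (5, [0, 3, 1, 2, 6, 11, 4, 5]), (4, [0, 1, 2, 3, 4, 7, 11]), (4, [0, 2, 1, 3, 5, 8, 11]), (4, [0, 3, 1, 2, 6, 9, 11]), (8, [0, 1, 2, 3, 4, 7, 10, 11]), (14, [0, 1, 2, 3, 4, 5, 6, 7, 8, 10, 11]), (14, [0, 1, 3, 2, 4, 6, 5, 7, 9, 10, 11]), (10, [0, 1, 2, 3,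 4, 5, 6, 7, 10, 11])]]

lemma good_ok : ∀ g ∈ goodT, certOk g.1 g.2.1 g.2.2 := by decide +kernel

lemma bad_par : ∀ b ∈ badT, b.length ≤ 10 ∧ ∀ i < b.length, b.getD i 0 ≤ i := by decide +kernel

def allT : List (List ℕ) := goodT.map Prod.fst ++ badT

/-- the target recorded for extending the `k`-th bad tree at vertex `v` is fine -/
def witOk (k v : ℕ) : Prop :=
  (((witT.getD k []).getD v (0, [])).1 < 16 ∨
    (allT.getD ((witT.getD k []).getD v (0, [])).1 []).length = (badT.getD k []).length + 1) ∧
  ((witT.getD k []).getD v (0, [])).1 < allT.length ∧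
  embOk (allT.getD ((witT.getD k []).getD v (0, [])).1 []) (badT.getD k [] ++ [v])
    ((witT.getD k []).getD v (0, [])).2

instance (k v : ℕ) : Decidable (witOk k v) := by
  unfold witOk; infer_instance

lemma wit_ok : ∀ k < badT.length, ∀ v < (badT.getD k []).length + 1, witOk k v := by
  decide +kernel

lemma claw_good {n : ℕ} (hn : 12 ≤ n) {G : SimpleGraph (Fin n)} (hG : G.Connected)
    (hc : TCont G [0, 0, 0]) : ∃ g ∈ goodT, TCont G g.1 := by
  have key : ∀ m : ℕ, (∃ b ∈ badT, m ≤ b.length ∧ TCont G b) ∨ ∃ g ∈ goodT, TCont G g.1 := by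
    intro m
    induction m with
    | zero => exact Or.inl ⟨[0, 0, 0], by decide +kernel, by simp, hc⟩
    | succ m ih =>
      rcases ih with ⟨b, hb, hm, hcb⟩ | h
      · obtain ⟨hlen, hpar⟩ := bad_par b hb
        obtain ⟨v, hv, hcv⟩ := hcb.step hG (by omega) hpar
        obtain ⟨k, hk, rfl⟩ := List.getElem_of_mem hb
        have e : badT[k] = badT.getD k [] := (List.getD_eq_getElem badT [] hk).symm
        rw [e] at hm hv hcv
        obtain ⟨w1, w2, w3⟩ := wit_ok k hk v hv
        set t := ((witT.getD k []).getD v (0, [])).1 with ht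
        have hct := hcv.emb w3
        have hl : (goodT.map Prod.fst).length = 16 := by decide +kernel
        rcases Nat.lt_or_ge t 16 with h16 | h16
        · right
          have ht' : t < (goodT.map Prod.fst).length := by omega
          rw [allT, List.getD_append _ _ _ _ ht', List.getD_eq_getElem _ _ ht'] at hct
          obtain ⟨g, hg, hg'⟩ := List.mem_map.1 (List.getElem_mem ht')
          exact ⟨g, hg, by rw [hg']; exact hct⟩
        · left
          have w1' := w1.resolve_left (by omega)
          rw [allT, List.length_append, hl] at w2
          have hb' : t - 16 < badT.length := by omega
          have e2 : allT.getD t [] = badT[t - 16] := by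
            rw [allT, List.getD_append_right _ _ _ _ (by omega), hl,
              List.getD_eq_getElem _ _ hb']
          rw [e2] at w1' hct
          exact ⟨_, List.getElem_mem hb', by omega, hct⟩
      · exact Or.inr h
  rcases key 11 with ⟨b, hb, hm, -⟩ | h
  · have := (bad_par b hb).1
    omega
  · exact h

lemma path_or_claw {n : ℕ} {G : SimpleGraph (Fin n)} (hG : G.Connected) (hc : ¬ TCont G [0, 0, 0])
    (m : ℕ) (hm : m + 1 ≤ n) : ∃ f : ℕ → Fin n,
      (∀ i < m + 1, ∀ j < m + 1, f i = f j → i = j) ∧ ∀ i < m, G.Adj (f i) (f (i + 1)) := by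
  induction m with
  | zero => exact ⟨fun _ => ⟨0, by omega⟩, fun i hi j hj _ => by omega, fun i hi => by omega⟩
  | succ m ih =>
    obtain ⟨f, hinj, hadj⟩ := ih (by omega)
    obtain ⟨i, hi, w, hw, hiw⟩ := exit_edge G hG (m + 1) (by omega) (by omega) f
    by_cases him : i = m
    · subst him
      refine ⟨fun j => if j < i + 1 then f j else w, ?_, ?_⟩
      · intro a ha b hb hab
        simp only at hab
        split_ifs at hab with h1 h2 h2
        · exact hinj a h1 b h2 hab
        · exact absurd hab (hw a h1)
        · exact absurd hab.symm (hw b h2)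
        · omega
      · intro a ha
        beta_reduce
        rcases Nat.lt_or_ge a i with h | h
        · rw [if_pos (by omega), if_pos (by omega)]; exact hadj a h
        · have : a = i := by omega
          subst this
          rw [if_pos (by omega), if_neg (by omega)]; exact hiw
    · by_cases hi0 : i = 0
      · subst hi0
        refine ⟨fun j => if j = 0 then w else f (j - 1), ?_, ?_⟩
        · intro a ha b hb hab
          simp only at hab
          split_ifs at hab with h1 h2 h2
          · omega
          · exact absurd hab.symm (hw (b - 1) (by omega))
          · exact absurd hab (hw (a - 1) (by omega))
          · have := hinj (a - 1) (by omega) (b - 1) (by omega) hab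
            omega
        · intro a ha
          beta_reduce
          by_cases h : a = 0
          · subst h
            simpa using hiw.symm
          · rw [if_neg h, if_neg (by omega)]
            have := hadj (a - 1) (by omega)
            rwa [Nat.sub_add_cancel (by omega)] at this
      · exfalso
        apply hc
        have n1 : f i ≠ f (i - 1) := fun h => by
          have := hinj i hi (i - 1) (by omega) h; omega
        have n2 : f i ≠ f (i + 1) := fun h => by
          have := hinj i hi (i + 1) (by omega) h; omega
        have n3 : f (i - 1) ≠ f (i + 1) := fun h => by
          have := hinj (i - 1) (by omega) (i + 1) (by omega) h; omega
        have n4 := hw i hi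
        have n5 := hw (i - 1) (by omega)
        have n6 := hw (i + 1) (by omega)
        have a1 := hadj (i - 1) (by omega)
        rw [Nat.sub_add_cancel (by omega)] at a1
        have a2 := hadj i (by omega)
        refine ⟨fun j => if j = 0 then f i else if j = 1 then f (i - 1) else
          if j = 2 then f (i + 1) else w, ?_, ?_⟩
        · intro a ha b hb hab
          simp only [List.length_cons, List.length_nil] at ha hb
          have n1' := n1.symm
          have n2' := n2.symm
          have n3' := n3.symm
          have n4' := n4.symm
          have n5' := n5.symm
          have n6' := n6.symm
          interval_cases a <;> interval_cases b <;> first | rfl | (exfalso; simp at hab; contradiction)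
        · intro a ha
          simp only [List.length_cons, List.length_nil] at ha
          interval_cases a
          · simpa using a1
          · simpa using a2.symm
          · simpa using hiw.symm

theorem stmt18 {n : ℕ} (hn : 12 ≤ n)
    (G : SimpleGraph (Fin n)) [DecidableRel G.Adj] (hG : G.Connected)
    [DecidableRel (SimpleGraph.pathGraph n).Adj]
    (α : ℝ) (hα0 : 1 / 2 ≤ α) (hα1 : α < 1) :
    Sk (Aalpha α G) 2 ≥ Sk (Aalpha α (SimpleGraph.pathGraph n)) 2 ∧
      (Sk (Aalpha α G) 2 = Sk (Aalpha α (SimpleGraph.pathGraph n)) 2 ↔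
        Nonempty (G ≃g SimpleGraph.pathGraph n)) := by
  have h2 : 2 ≤ n := by omega
  have hiso : Nonempty (G ≃g SimpleGraph.pathGraph n) →
      Sk (Aalpha α G) 2 = Sk (Aalpha α (SimpleGraph.pathGraph n)) 2 := by
    rintro ⟨e⟩
    apply le_antisymm
    · exact Sk_mono h2 hα0 hα1 _ _ e.toEquiv fun u v h => e.map_adj_iff.2 h
    · exact Sk_mono h2 hα0 hα1 _ _ e.symm.toEquiv fun u v h => e.symm.map_adj_iff.2 h
  have hmain : ¬ Nonempty (G ≃g SimpleGraph.pathGraph n) →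
      Sk (Aalpha α (SimpleGraph.pathGraph n)) 2 < Sk (Aalpha α G) 2 := by
    intro hno
    by_cases hc : TCont G [0, 0, 0]
    · obtain ⟨g, hg, hcg⟩ := claw_good hn hG hc
      exact lt_of_lt_of_le (path_Sk_lt h2 hα1) (cert_ge h2 hα0 hα1 G (good_ok g hg) hcg)
    · obtain ⟨f, hinj, hadj⟩ := path_or_claw hG hc (n - 1) (by omega)
      classical
      have hi : Function.Injective (fun i : Fin n => f i.val) := by
        intro a b hab
        exact Fin.ext (hinj a.1 (by omega) b.1 (by omega) hab)
      let σ : Fin n ≃ Fin n := Equiv.ofBijective _ (Finite.injective_iff_bijective.1 hi)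
      have hσ : ∀ i, σ i = f i.val := fun i => rfl
      have hle : SimpleGraph.pathGraph n ≤ G.comap σ := by
        intro u v huv
        rw [SimpleGraph.comap_adj, hσ, hσ]
        rcases SimpleGraph.pathGraph_adj.1 huv with h | h
        · rw [← h]; exact hadj _ (by omega)
        · rw [← h]; exact (hadj _ (by omega)).symm
      have hne : SimpleGraph.pathGraph n ≠ G.comap σ := by
        intro h
        apply hno
        rw [h]
        exact ⟨(SimpleGraph.Iso.comap σ G).symm⟩
      have := unicyclic_gt h2 hα0 hα1 (G.comap σ) (lt_of_le_of_ne hle hne)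
      refine lt_of_lt_of_le this ?_
      exact Sk_mono h2 hα0 hα1 _ _ σ fun u v h => h
  by_cases h : Nonempty (G ≃g SimpleGraph.pathGraph n)
  · exact ⟨(hiso h).ge, fun _ => h, fun _ => hiso h⟩
  · exact ⟨(hmain h).le, fun e => absurd e (hmain h).ne', fun e => absurd e h⟩
end
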